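/- Let n ≥ 1 and let a x : Fin n → ℝ satisfy |a j * x i| < 1 for all i, j. Then the family indexed by strictly decreasing tuples k : Fin n → ℕ, with term D(a, k) · D(x, k), has sum equal to (∏_{i<j} (a j - a i)) · (∏_{i<j} (x j - x i)) · ∏_{i,j} (1 - a i * x j)⁻¹. (This is the classical Cauchy identity Σ_λ s_λ(a) s_λ(x) = ∏_{i,j} 1/(1 − a_i x_j), written in determinant form via the bialternant formula, obtained from Theorem 1 with g(x) = 1/(1−x).) -/

import Mathlib

/-!
Expanding `det (1 / (1 - a i * x j))` along the geometric series of its entries gives a sum over all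
tuples of exponents `k` of `det (a i ^ k j) * ∏ j, x j ^ k j`. Tuples with a repeated exponent
contribute zero, and the `n!` rearrangements of a strictly decreasing tuple together contribute
`det (a i ^ k j) * det (x i ^ k j)`: this is the Cauchy–Binet formula for a product of an `n × ∞`
and an `∞ × n` matrix. On the other hand, Gaussian elimination evaluates the same determinant
in closed form, as Cauchy's determinant.
-/

section ProductsOfSeries

variable {R : Type*} [NormedCommRing R]

theorem summable_norm_and_hasSum_prod_pi_fin {n : ℕ} {β : Fin n → Type*} {f : ∀ i, β i → R}
    {s : Fin n → R} (hnorm : ∀ i, Summable fun b => ‖f i b‖) (hsum : ∀ i, HasSum (f i) (s i)) :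
    Summable (fun k : ∀ i, β i => ‖∏ i, f i (k i)‖) ∧
      HasSum (fun k : ∀ i, β i => ∏ i, f i (k i)) (∏ i, s i) := by
  induction n with
  | zero => simp [Summable.of_finite]
  | succ n ih =>
    obtain ⟨htail_norm, htail⟩ := ih (fun i => hnorm i.succ) fun i => hsum i.succ
    have hsummable := summable_mul_of_summable_norm' (hnorm 0) (hsum 0).summable htail_norm
      htail.summable
    have hmul := (hsum 0).mul htail hsummable
    have hmul_norm := (hnorm 0).mul_norm htail_norm
    rw [← (Fin.consEquiv β).summable_iff, ← (Fin.consEquiv β).hasSum_iff]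
    simpa only [Function.comp_def, Fin.prod_univ_succ, Fin.consEquiv_apply, Fin.cons_zero,
      Fin.cons_succ] using And.intro hmul_norm hmul

theorem hasSum_prod_pi {ι : Type*} [Fintype ι] {β : ι → Type*} {f : ∀ i, β i → R} {s : ι → R}
    (hnorm : ∀ i, Summable fun b => ‖f i b‖) (hsum : ∀ i, HasSum (f i) (s i)) :
    HasSum (fun k : ∀ i, β i => ∏ i, f i (k i)) (∏ i, s i) := by
  let e := (Fintype.equivFin ι).symm
  have hfin := (summable_norm_and_hasSum_prod_pi_fin (fun i => hnorm (e i)) fun i => hsum (e i)).2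
  rw [← (Equiv.piCongrLeft β e).hasSum_iff]
  simpa only [Function.comp_def, ← e.prod_comp, Equiv.piCongrLeft_apply_apply] using hfin

end ProductsOfSeries

section DecreasingRearrangement

variable {α : Type*} {n : ℕ}

theorem injective_strictAnti_comp_perm [Preorder α] :
    Function.Injective
      fun p : {k : Fin n → α // StrictAnti k} × Equiv.Perm (Fin n) => p.1.1 ∘ p.2 := by
  rintro ⟨⟨k, hk⟩, σ⟩ ⟨⟨l, hl⟩, τ⟩ (h : k ∘ σ = l ∘ τ)
  have hrange : Set.range k = Set.range l := by
    rw [← σ.surjective.range_comp k, h, τ.surjective.range_comp]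
  obtain rfl : k = l := (hk.range_inj hl).1 hrange
  obtain rfl : σ = τ := Equiv.ext fun i => hk.injective (congrFun h i)
  rfl

variable [LinearOrder α]

theorem exists_strictAnti_comp_perm_eq {k : Fin n → α} (hk : Function.Injective k) :
    ∃ (l : Fin n → α) (σ : Equiv.Perm (Fin n)), StrictAnti l ∧ l ∘ σ = k := by
  let τ : Equiv.Perm (Fin n) := Fin.revPerm.trans (Tuple.sort k)
  have hanti : Antitone (k ∘ τ) := fun _ _ hij => Tuple.monotone_sort k (Fin.rev_le_rev.2 hij)
  exact ⟨k ∘ τ, τ.symm, hanti.strictAnti_of_injective (hk.comp τ.injective), by ext; simp⟩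

theorem hasSum_strictAnti_sum_perm {M : Type*} [AddCommMonoid M] [TopologicalSpace M]
    [ContinuousAdd M] [RegularSpace M] {f : (Fin n → α) → M} {s : M} (hf : HasSum f s)
    (hzero : ∀ k, ¬ Function.Injective k → f k = 0) :
    HasSum (fun k : {k : Fin n → α // StrictAnti k} =>
      ∑ σ : Equiv.Perm (Fin n), f (k.1 ∘ σ)) s := by
  have hoff : ∀ k ∉ Set.range
      (fun p : {k : Fin n → α // StrictAnti k} × Equiv.Perm (Fin n) => p.1.1 ∘ p.2),
      f k = 0 := fun k hk => hzero k fun hinj => by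
    obtain ⟨l, σ, hl, rfl⟩ := exists_strictAnti_comp_perm_eq hinj
    exact hk ⟨(⟨l, hl⟩, σ), rfl⟩
  exact ((injective_strictAnti_comp_perm.hasSum_iff hoff).2 hf).prod_fiberwise
    fun k => hasSum_fintype _

end DecreasingRearrangement

section CauchyBinet

theorem sum_perm_det_submatrix_mul_prod {ι R : Type*} [Fintype ι] [DecidableEq ι] [CommRing R]
    (A B : Matrix ι ι R) :
    ∑ σ : Equiv.Perm ι, (A.submatrix id σ).det * ∏ i, B i (σ i) = A.det * B.det := by
  rw [← B.det_transpose, B.transpose.det_apply', Finset.mul_sum]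
  refine Finset.sum_congr rfl fun σ _ => ?_
  rw [Matrix.det_permute', mul_comm (_ : R) A.det, mul_assoc]
  rfl

theorem det_submatrix_id_eq_zero_of_not_injective {ι α R : Type*} [Fintype ι] [DecidableEq ι]
    [CommRing R] (A : Matrix ι α R) {k : ι → α} (hk : ¬ Function.Injective k) :
    (A.submatrix id k).det = 0 := by
  obtain ⟨i, j, hij, hne⟩ := Function.not_injective_iff.1 hk
  exact Matrix.det_zero_of_column_eq hne fun l => congrArg (A l) hij

variable {α R : Type*} [NormedCommRing R]

theorem hasSum_det_submatrix_mul_prod {ι : Type*} [Fintype ι] [DecidableEq ι] {A B : Matrix ι α R}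
    {C : Matrix ι ι R} (hnorm : ∀ i j, Summable fun m => ‖A i m * B j m‖)
    (hsum : ∀ i j, HasSum (fun m => A i m * B j m) (C i j)) :
    HasSum (fun k : ι → α => (A.submatrix id k).det * ∏ i, B i (k i)) C.det := by
  simp only [Matrix.det_apply', Matrix.submatrix_apply, id, Finset.sum_mul, mul_assoc,
    ← Finset.prod_mul_distrib]
  exact hasSum_sum fun σ _ =>
    (hasSum_prod_pi (fun i => hnorm (σ i) i) fun i => hsum (σ i) i).mul_left _

theorem hasSum_det_submatrix_mul_det_submatrix [LinearOrder α] {n : ℕ}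
    {A B : Matrix (Fin n) α R} {C : Matrix (Fin n) (Fin n) R}
    (hnorm : ∀ i j, Summable fun m => ‖A i m * B j m‖)
    (hsum : ∀ i j, HasSum (fun m => A i m * B j m) (C i j)) :
    HasSum (fun k : {k : Fin n → α // StrictAnti k} =>
      (A.submatrix id k.1).det * (B.submatrix id k.1).det) C.det := by
  refine (hasSum_strictAnti_sum_perm (hasSum_det_submatrix_mul_prod hnorm hsum)
    fun k hk => ?_).congr_fun fun k => ?_
  · rw [det_submatrix_id_eq_zero_of_not_injective A hk, zero_mul]
  · exact (sum_perm_det_submatrix_mul_prod (A.submatrix id k.1) (B.submatrix id k.1)).symm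

end CauchyBinet

section CauchyDeterminant

variable {K : Type*} [Field K]

theorem det_succ_eq_mul_det_sub {n : ℕ} (M : Matrix (Fin (n + 1)) (Fin (n + 1)) K)
    (hM : M 0 0 ≠ 0) :
    M.det = M 0 0 *
      (Matrix.of fun i j : Fin n => M i.succ j.succ - M i.succ 0 / M 0 0 * M 0 j.succ).det := by
  let c : Fin (n + 1) → K := Fin.cons 0 fun i => M i.succ 0 / M 0 0
  let N : Matrix (Fin (n + 1)) (Fin (n + 1)) K := Matrix.of fun i j => M i j - c i * M 0 j
  have hdet : M.det = N.det :=
    Matrix.det_eq_of_forall_row_eq_smul_add_const c 0 rfl fun i j => by simp [N, c]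
  have hcol (i : Fin n) : N i.succ 0 = 0 := by simp [N, c, hM]
  have hpivot : N 0 0 = M 0 0 := by simp [N, c]
  rw [hdet, Matrix.det_succ_column_zero, Fin.sum_univ_succ]
  simp only [hcol, hpivot, Fin.val_zero, pow_zero, one_mul, mul_zero, zero_mul,
    Finset.sum_const_zero, add_zero, Fin.succAbove_zero]
  rfl

theorem inv_one_sub_mul_sub_div_mul {p q y z : K} (hpy : 1 - p * y ≠ 0) (hpz : 1 - p * z ≠ 0)
    (hqy : 1 - q * y ≠ 0) :
    (1 - p * y)⁻¹ - (1 - p * z)⁻¹ / (1 - q * z)⁻¹ * (1 - q * y)⁻¹ =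
      (p - q) * (1 - p * z)⁻¹ * ((y - z) * (1 - q * y)⁻¹ * (1 - p * y)⁻¹) := by
  rw [div_inv_eq_mul]
  rw [mul_comm q y] at hqy ⊢
  field_simp
  ring

theorem det_inv_one_sub_mul_succ {n : ℕ} {a x : Fin (n + 1) → K}
    (hax : ∀ i j, 1 - a i * x j ≠ 0) :
    (Matrix.of fun i j => (1 - a i * x j)⁻¹).det =
      (1 - a 0 * x 0)⁻¹ * ((∏ i : Fin n, (a i.succ - a 0) * (1 - a i.succ * x 0)⁻¹) *
        ((∏ j : Fin n, (x j.succ - x 0) * (1 - a 0 * x j.succ)⁻¹) *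
          (Matrix.of fun i j : Fin n => (1 - a i.succ * x j.succ)⁻¹).det)) := by
  rw [det_succ_eq_mul_det_sub _ (inv_ne_zero (hax 0 0)), ← Matrix.det_mul_row,
    ← Matrix.det_mul_column]
  simp only [Matrix.of_apply, inv_one_sub_mul_sub_div_mul (hax _ _) (hax _ _) (hax _ _)]

theorem det_inv_one_sub_mul {n : ℕ} {a x : Fin n → K} (hax : ∀ i j, 1 - a i * x j ≠ 0) :
    (Matrix.of fun i j => (1 - a i * x j)⁻¹).det =
      (∏ i, ∏ j ∈ Finset.Ioi i, (a j - a i)) * (∏ i, ∏ j ∈ Finset.Ioi i, (x j - x i)) *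
        ∏ i, ∏ j, (1 - a i * x j)⁻¹ := by
  induction n with
  | zero => simp
  | succ n ih =>
    rw [det_inv_one_sub_mul_succ hax, ih fun i j => hax i.succ j.succ]
    simp only [Fin.prod_univ_succ, Fin.prod_Ioi_succ, Fin.prod_Ioi_zero, Finset.prod_mul_distrib]
    ring

end CauchyDeterminant

theorem cauchy_identity_determinant_form_general {K : Type*} [NormedField K] {n : ℕ}
    {a x : Fin n → K} (hax : ∀ i j, ‖a i * x j‖ < 1) :
    HasSum
      (fun k : {k : Fin n → ℕ // StrictAnti k} =>
        (Matrix.of fun i j => a i ^ k.1 j).det * (Matrix.of fun i j => x i ^ k.1 j).det)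
      ((∏ i, ∏ j ∈ Finset.Ioi i, (a j - a i)) * (∏ i, ∏ j ∈ Finset.Ioi i, (x j - x i)) *
        ∏ i, ∏ j, (1 - a i * x j)⁻¹) := by
  have hne (i j : Fin n) : 1 - a i * x j ≠ 0 := (isUnit_one_sub_of_norm_lt_one (hax i j)).ne_zero
  have hnorm (i j : Fin n) : Summable fun m : ℕ => ‖a i ^ m * x j ^ m‖ := by
    simpa only [mul_pow] using summable_norm_geometric_of_norm_lt_one (hax i j)
  have hgeom (i j : Fin n) : HasSum (fun m : ℕ => a i ^ m * x j ^ m) (1 - a i * x j)⁻¹ := by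
    simpa only [mul_pow] using hasSum_geometric_of_norm_lt_one (hax i j)
  rw [← det_inv_one_sub_mul hne]
  exact hasSum_det_submatrix_mul_det_submatrix (A := Matrix.of fun i m => a i ^ m)
    (B := Matrix.of fun i m => x i ^ m) hnorm hgeom

theorem cauchy_identity_determinant_form
    (n : ℕ) (hn : 1 ≤ n) (a x : Fin n → ℝ)
    (hax : ∀ i j : Fin n, |a j * x i| < 1) :
    HasSum
      (fun k : {k : Fin n → ℕ // StrictAnti k} =>
        (Matrix.of fun i j : Fin n => (a i) ^ (k.1 j)).det *
          (Matrix.of fun i j : Fin n => (x i) ^ (k.1 j)).det)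
      ((∏ i : Fin n, ∏ j ∈ Finset.Ioi i, (a j - a i)) *
        (∏ i : Fin n, ∏ j ∈ Finset.Ioi i, (x j - x i)) *
        ∏ i : Fin n, ∏ j : Fin n, (1 - a i * x j)⁻¹) :=
  cauchy_identity_determinant_form_general fun i j => hax j i
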